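/- Let (H, R) be a quasitriangular Hopf algebra over a field k with antipode S, let Q : H* → H, Q(p) = Σ p(R²r¹) R¹r², and define on H* the covariantised product f⋆g = Σ (R¹⇀f)·(g↼S(R²)), where · is the product of H*_R. Then ⋆ is associative, and Q(f⋆g) = Q(f)Q(g) for all f, g ∈ H*. -/

import Mathlib

open TensorProduct LinearMap

noncomputable section

section RegularActions

variable {k H : Type*} [Field k] [Ring H] [Algebra k H]

/-- Left regular action of `H` on its dual: `(h ⇀ p)(x) = p (x * h)`. -/
def lact (h : H) (p : Module.Dual k H) : Module.Dual k H :=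
  p ∘ₗ LinearMap.mulRight k h

/-- Right regular action of `H` on its dual: `(p ↼ h)(x) = p (h * x)`. -/
def ract (h : H) (p : Module.Dual k H) : Module.Dual k H :=
  p ∘ₗ LinearMap.mulLeft k h

end RegularActions

section Legs

variable (k H : Type*) [Field k] [Ring H] [Algebra k H]

/-- `R ⊗ 1` viewed in `H ⊗ (H ⊗ H)` (the element `R₁₂`). -/
def leg12 (R : H ⊗[k] H) : H ⊗[k] (H ⊗[k] H) :=
  TensorProduct.assoc k H H H (R ⊗ₜ[k] (1 : H))

/-- The element `R₂₃ = 1 ⊗ R` of `H ⊗ (H ⊗ H)`. -/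
def leg23 (R : H ⊗[k] H) : H ⊗[k] (H ⊗[k] H) := (1 : H) ⊗ₜ[k] R

/-- The element `R₁₃` of `H ⊗ (H ⊗ H)`. -/
def leg13 (R : H ⊗[k] H) : H ⊗[k] (H ⊗[k] H) :=
  lTensor H (TensorProduct.comm k H H).toLinearMap (leg12 k H R)

end Legs

section QuasiTriangular

variable (k H : Type*) [Field k] [Ring H] [Bialgebra k H]

/-- `R` is an R-matrix making the bialgebra `H` quasitriangular:
`R` is invertible, `(Δ ⊗ id)(R) = R₁₃ R₂₃`, `(id ⊗ Δ)(R) = R₁₃ R₁₂`, and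
`Δᶜᵒᵖ(h) R = R Δ(h)` for all `h`. -/
def IsRMatrix (R : H ⊗[k] H) : Prop :=
  IsUnit R
  ∧ TensorProduct.assoc k H H H
      (rTensor H (Coalgebra.comul (R := k) (A := H)) R) = leg13 k H R * leg23 k H R
  ∧ lTensor H (Coalgebra.comul (R := k) (A := H)) R = leg13 k H R * leg12 k H R
  ∧ ∀ h : H, (TensorProduct.comm k H H) (Coalgebra.comul h) * R = R * Coalgebra.comul h

variable {k H}

/-- The convolution product on `H*`: `(f g)(h) = Σ f(h₁) g(h₂)`. -/
def conv (f g : Module.Dual k H) : Module.Dual k H :=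
  LinearMap.mul' k k ∘ₗ TensorProduct.map f g ∘ₗ (Coalgebra.comul (R := k) (A := H))

/-- The multiplication of `H*_R`: `(f · g)(h) = Σ g(h₁ R²) f(h₂ R¹)`,
i.e. `f · g = Σ (R² ⇀ g)(R¹ ⇀ f)`. -/
def mulR (R : H ⊗[k] H) (f g : Module.Dual k H) : Module.Dual k H :=
  LinearMap.mul' k k ∘ₗ TensorProduct.map g f
    ∘ₗ LinearMap.mulRight k ((TensorProduct.comm k H H) R)
    ∘ₗ (Coalgebra.comul (R := k) (A := H))

/-- The map `Q : H* → H`, `Q(p) = Σ p(R² r¹) R¹ r²`, i.e. `Q(p) = (p ⊗ id)(R₂₁ R)`. -/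
def Qmap (R : H ⊗[k] H) : Module.Dual k H →ₗ[k] H :=
  (TensorProduct.lid k H).toLinearMap
    ∘ₗ rTensor H (contractLeft k H)
    ∘ₗ (TensorProduct.assoc k (Module.Dual k H) H H).symm.toLinearMap
    ∘ₗ (TensorProduct.mk k (Module.Dual k H) (H ⊗[k] H)).flip
        ((TensorProduct.comm k H H) R * R)

end QuasiTriangular

/-
Since `(id ⊗ Δ)(R) = R₁₃ R₁₂`, the covariantised product is `f ⋆ g = (g ⊗ f) ∘ Δ⋆`, where
`Δ⋆(x) = (x₁ ◁ R²) ⊗ x₂ R¹` and `x ◁ h = S(h₁) x h₂` is the right adjoint action. By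
quasi-cocommutativity `Δ⋆` is equivariant for `◁`, where `h` acts on `H ⊗ H` by
`x ⊗ y ↦ (x ◁ h₂) ⊗ (y ◁ h₁)`. By this equivariance and the two hexagon identities, both
iterates of `Δ⋆` are obtained from the iterated coproduct by the same three operators: write `ρᵢ`
and `αᵢ` for right multiplication and the adjoint action on the `i`-th factor of `H ⊗ H ⊗ H`, and
apply `R` in turn through the pairs `(ρ₂, α₁)`, `(ρ₃, α₁)` and `(ρ₃, α₂)`. Hence `Δ⋆` is
coassociative and `⋆` is associative.

For `T = R₂₁ R` we have `(Δ ⊗ id)(T) = R₃₂ T₁₃ R₂₃`. As `T` commutes with the image of `Δ`, the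
factor `T₁₃` can be moved past everything that `Δ⋆` adds to `Δ`, and `1 ◁ h = ε(h)` collapses
the remaining factors to `T₂₃`. This gives `(Δ⋆ ⊗ id)(T) = T₂₃ T₁₃`, which is the
multiplicativity of `Q(p) = (p ⊗ id)(T)`.
-/

namespace Covariantised

section MulMap

variable {k M N P C D A B : Type*} [CommSemiring k]
  [AddCommMonoid M] [Module k M] [AddCommMonoid N] [Module k N] [AddCommMonoid P] [Module k P]
  [Semiring C] [Algebra k C] [Semiring D] [Algebra k D] [Semiring A] [Algebra k A]
  [Semiring B] [Algebra k B]

/-- The linear map `M ⊗ N → A`, `x ⊗ y ↦ φ x * ψ y`. -/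
def mulMap (φ : M →ₗ[k] A) (ψ : N →ₗ[k] A) : M ⊗[k] N →ₗ[k] A :=
  LinearMap.mul' k A ∘ₗ TensorProduct.map φ ψ

@[simp] lemma mulMap_tmul (φ : M →ₗ[k] A) (ψ : N →ₗ[k] A) (x : M) (y : N) :
    mulMap φ ψ (x ⊗ₜ[k] y) = φ x * ψ y := rfl

lemma mulMap_comp_rTensor (φ : N →ₗ[k] A) (ψ : P →ₗ[k] A) (δ : M →ₗ[k] N) :
    mulMap φ ψ ∘ₗ rTensor P δ = mulMap (φ ∘ₗ δ) ψ := by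
  ext; simp

lemma mulMap_comp_lTensor (φ : P →ₗ[k] A) (ψ : N →ₗ[k] A) (δ : M →ₗ[k] N) :
    mulMap φ ψ ∘ₗ lTensor P δ = mulMap φ (ψ ∘ₗ δ) := by
  ext; simp

lemma mulMap_mulMap_comp_assoc (φ : M →ₗ[k] A) (ψ : N →ₗ[k] A) (χ : P →ₗ[k] A) :
    mulMap φ (mulMap ψ χ) ∘ₗ (TensorProduct.assoc k M N P).toLinearMap
      = mulMap (mulMap φ ψ) χ := by
  ext; simp [mul_assoc]

lemma mulMap_comm {φ : M →ₗ[k] A} {ψ : N →ₗ[k] A} (h : ∀ x y, Commute (φ x) (ψ y))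
    (z : N ⊗[k] M) : mulMap φ ψ (TensorProduct.comm k N M z) = mulMap ψ φ z := by
  induction z with
  | zero => simp
  | tmul x y => exact (h y x).eq
  | add x y hx hy => simp only [map_add, hx, hy]

lemma comp_mulMap (F : A →ₐ[k] B) (φ : M →ₗ[k] A) (ψ : N →ₗ[k] A) :
    F.toLinearMap ∘ₗ mulMap φ ψ = mulMap (F.toLinearMap ∘ₗ φ) (F.toLinearMap ∘ₗ ψ) := by
  ext; simp

lemma semiconjBy_mulMap {a : A} {φ φ' : M →ₗ[k] A} {ψ ψ' : N →ₗ[k] A}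
    (hφ : ∀ x, SemiconjBy a (φ x) (φ' x)) (hψ : ∀ y, SemiconjBy a (ψ y) (ψ' y))
    (z : M ⊗[k] N) : SemiconjBy a (mulMap φ ψ z) (mulMap φ' ψ' z) := by
  induction z with
  | zero => simp
  | tmul x y => exact (hφ x).mul_right (hψ y)
  | add x y hx hy => simpa only [map_add] using hx.add_right hy

lemma commute_mulMap {a : A} {φ : M →ₗ[k] A} {ψ : N →ₗ[k] A} (hφ : ∀ x, Commute a (φ x))
    (hψ : ∀ y, Commute a (ψ y)) (z : M ⊗[k] N) : Commute a (mulMap φ ψ z) :=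
  semiconjBy_mulMap hφ hψ z

lemma mulMap_eq_lift (φ : C →ₐ[k] A) (ψ : D →ₐ[k] A) (h : ∀ x y, Commute (φ x) (ψ y)) :
    mulMap φ.toLinearMap ψ.toLinearMap = (Algebra.TensorProduct.lift φ ψ h).toLinearMap := by
  ext; simp

lemma mulMap_mul (φ : C →ₐ[k] A) (ψ : D →ₐ[k] A) (h : ∀ x y, Commute (φ x) (ψ y))
    (z w : C ⊗[k] D) :
    mulMap φ.toLinearMap ψ.toLinearMap (z * w)
      = mulMap φ.toLinearMap ψ.toLinearMap z * mulMap φ.toLinearMap ψ.toLinearMap w := by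
  simp only [mulMap_eq_lift φ ψ h, AlgHom.toLinearMap_apply, map_mul]

end MulMap

section Convolution

variable {k M A B : Type*} [CommSemiring k] [AddCommMonoid M] [Module k M]
  [Semiring A] [Algebra k A] [Semiring B] [Algebra k B]

/-- The convolution of `φ` and `ψ` along a linear map `δ : M → M ⊗ M`. It is used both for the
coproduct of `H` and for the one that is dual to the covariantised product. -/
def convAlong (δ : M →ₗ[k] M ⊗[k] M) (φ ψ : M →ₗ[k] A) : M →ₗ[k] A :=
  mulMap φ ψ ∘ₗ δ

lemma convAlong_assoc {δ : M →ₗ[k] M ⊗[k] M}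
    (hδ : (TensorProduct.assoc k M M M).toLinearMap ∘ₗ rTensor M δ ∘ₗ δ = lTensor M δ ∘ₗ δ)
    (φ ψ χ : M →ₗ[k] A) :
    convAlong δ (convAlong δ φ ψ) χ = convAlong δ φ (convAlong δ ψ χ) := by
  simp only [convAlong]
  rw [← mulMap_comp_rTensor, ← mulMap_comp_lTensor, ← mulMap_mulMap_comp_assoc,
    LinearMap.comp_assoc, LinearMap.comp_assoc, LinearMap.comp_assoc, hδ]

lemma comp_convAlong (F : A →ₐ[k] B) (δ : M →ₗ[k] M ⊗[k] M) (φ ψ : M →ₗ[k] A) :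
    F.toLinearMap ∘ₗ convAlong δ φ ψ
      = convAlong δ (F.toLinearMap ∘ₗ φ) (F.toLinearMap ∘ₗ ψ) := by
  simp only [convAlong, ← LinearMap.comp_assoc, comp_mulMap]

end Convolution

local infixl:70 "⊚" => convAlong Coalgebra.comul

section Legs

variable {k H A : Type*} [Field k] [Ring H] [Algebra k H] [Semiring A] [Algebra k A]

lemma leg12_tmul (x y : H) : leg12 k H (x ⊗ₜ[k] y) = x ⊗ₜ[k] (y ⊗ₜ[k] 1) := rfl

lemma leg13_tmul (x y : H) : leg13 k H (x ⊗ₜ[k] y) = x ⊗ₜ[k] (1 ⊗ₜ[k] y) := rfl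

lemma leg12_add (z w : H ⊗[k] H) : leg12 k H (z + w) = leg12 k H z + leg12 k H w := by
  simp only [leg12, TensorProduct.add_tmul, map_add]

lemma leg13_add (z w : H ⊗[k] H) : leg13 k H (z + w) = leg13 k H z + leg13 k H w := by
  simp only [leg13, leg12_add, map_add]

lemma leg23_add (z w : H ⊗[k] H) : leg23 k H (z + w) = leg23 k H z + leg23 k H w :=
  TensorProduct.tmul_add ..

lemma mulMap_leg13_mul_leg23 (φ ψ : H →ₗ[k] A) (χ : H →ₐ[k] A)
    (hψχ : ∀ x y, Commute (ψ x) (χ y)) (z w : H ⊗[k] H) :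
    mulMap φ (mulMap ψ χ.toLinearMap) (leg13 k H z * leg23 k H w)
      = mulMap φ χ.toLinearMap z * mulMap ψ χ.toLinearMap w := by
  induction z with
  | zero => simp [leg13, leg12]
  | add z z' hz hz' => simp only [leg13_add, map_add, add_mul, hz, hz']
  | tmul x y =>
    induction w with
    | zero => simp [leg23]
    | add w w' hw hw' => simp only [leg23_add, mul_add, map_add, hw, hw']
    | tmul x' y' =>
      simp only [leg13_tmul, leg23, Algebra.TensorProduct.tmul_mul_tmul, mul_one, one_mul,
        mulMap_tmul, AlgHom.toLinearMap_apply, map_mul]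
      rw [← mul_assoc (ψ x'), (hψχ x' y).eq]
      simp only [mul_assoc]

lemma mulMap_leg13_mul_leg12 (φ : H →ₐ[k] A) (ψ χ : H →ₗ[k] A)
    (hφχ : ∀ x y, Commute (φ x) (χ y)) (hψχ : ∀ x y, Commute (ψ x) (χ y)) (z w : H ⊗[k] H) :
    mulMap φ.toLinearMap (mulMap ψ χ) (leg13 k H z * leg12 k H w)
      = mulMap φ.toLinearMap χ z * mulMap φ.toLinearMap ψ w := by
  induction z with
  | zero => simp [leg13, leg12]
  | add z z' hz hz' => simp only [leg13_add, map_add, add_mul, hz, hz']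
  | tmul x y =>
    induction w with
    | zero => simp [leg12]
    | add w w' hw hw' => simp only [leg12_add, mul_add, map_add, hw, hw']
    | tmul x' y' =>
      simp only [leg13_tmul, leg12_tmul, Algebra.TensorProduct.tmul_mul_tmul, mul_one, one_mul,
        mulMap_tmul, AlgHom.toLinearMap_apply, map_mul]
      rw [(hψχ y' y).eq, mul_assoc, ← mul_assoc (φ x'), (hφχ x' y).eq]
      simp only [mul_assoc]

lemma mulMap_leg23_mul_leg13 (φ ψ : H →ₗ[k] A) (χ : H →ₐ[k] A)
    (hφψ : ∀ x y, Commute (φ x) (ψ y)) (hφχ : ∀ x y, Commute (φ x) (χ y)) (w z : H ⊗[k] H) :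
    mulMap φ (mulMap ψ χ.toLinearMap) (leg23 k H w * leg13 k H z)
      = mulMap ψ χ.toLinearMap w * mulMap φ χ.toLinearMap z := by
  induction z with
  | zero => simp [leg13, leg12]
  | add z z' hz hz' => simp only [leg13_add, map_add, mul_add, hz, hz']
  | tmul x y =>
    induction w with
    | zero => simp [leg23]
    | add w w' hw hw' => simp only [leg23_add, add_mul, map_add, hw, hw']
    | tmul x' y' =>
      simp only [leg13_tmul, leg23, Algebra.TensorProduct.tmul_mul_tmul, mul_one, one_mul,
        mulMap_tmul, AlgHom.toLinearMap_apply, map_mul]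
      rw [← mul_assoc, (hφψ x x').eq, mul_assoc, ← mul_assoc (φ x), (hφχ x y').eq]
      simp only [mul_assoc]

end Legs

section ConvAlgHom

variable {k H A : Type*} [CommSemiring k] [Semiring H] [Bialgebra k H] [Semiring A] [Algebra k A]

/-- The convolution of two algebra homomorphisms with commuting values, which is again an algebra
homomorphism. -/
def convAlgHom (φ ψ : H →ₐ[k] A) (h : ∀ x y, Commute (φ x) (ψ y)) : H →ₐ[k] A :=
  (Algebra.TensorProduct.lift φ ψ h).comp (Bialgebra.comulAlgHom k H)

lemma convAlgHom_toLinearMap (φ ψ : H →ₐ[k] A) (h : ∀ x y, Commute (φ x) (ψ y)) :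
    (convAlgHom φ ψ h).toLinearMap = φ.toLinearMap ⊚ ψ.toLinearMap := by
  rw [convAlong, mulMap_eq_lift φ ψ h]
  rfl

lemma linearMap_comp_counit_convAlong (φ : H →ₗ[k] A) :
    (Algebra.linearMap k A ∘ₗ Coalgebra.counit) ⊚ φ = φ := by
  have h : mulMap (Algebra.linearMap k A) φ = φ ∘ₗ (TensorProduct.lid k H).toLinearMap := by
    ext; simp
  rw [convAlong, ← mulMap_comp_rTensor, h, LinearMap.comp_assoc, LinearMap.comp_assoc,
    Coalgebra.rTensor_counit_comp_comul]
  ext; simp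

lemma semiconjBy_convAlong {a : A} {φ φ' ψ ψ' : H →ₗ[k] A}
    (hφ : ∀ x, SemiconjBy a (φ x) (φ' x)) (hψ : ∀ x, SemiconjBy a (ψ x) (ψ' x)) (h : H) :
    SemiconjBy a ((φ ⊚ ψ) h) ((φ' ⊚ ψ') h) :=
  semiconjBy_mulMap hφ hψ _

lemma commute_convAlong {a : A} {φ ψ : H →ₗ[k] A} (hφ : ∀ x, Commute a (φ x))
    (hψ : ∀ x, Commute a (ψ x)) (h : H) : Commute a ((φ ⊚ ψ) h) :=
  commute_mulMap hφ hψ _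

lemma comul_convAlong_assoc (φ ψ χ : H →ₗ[k] A) : (φ ⊚ ψ) ⊚ χ = φ ⊚ (ψ ⊚ χ) :=
  convAlong_assoc Coalgebra.coassoc φ ψ χ

end ConvAlgHom

section Monodromy

variable {k H A : Type*} [CommSemiring k] [Semiring H] [Algebra k H] [Semiring A] [Algebra k A]

/-- The monodromy element `R₂₁ R` of a quasitriangular structure. -/
def monodromy (R : H ⊗[k] H) : H ⊗[k] H := TensorProduct.comm k H H R * R

lemma mulMap_monodromy (φ ψ : H →ₐ[k] A) (h : ∀ x y, Commute (φ x) (ψ y)) (R : H ⊗[k] H) :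
    mulMap φ.toLinearMap ψ.toLinearMap (monodromy R)
      = mulMap ψ.toLinearMap φ.toLinearMap R * mulMap φ.toLinearMap ψ.toLinearMap R := by
  rw [monodromy, mulMap_mul φ ψ h, mulMap_comm h]

end Monodromy

section RMatrix

variable {k H A : Type*} [Field k] [Ring H] [Bialgebra k H] [Semiring A] [Algebra k A]
  {R : H ⊗[k] H}

lemma mulMap_convAlong_left (hR : IsRMatrix k H R) (φ ψ : H →ₗ[k] A) (χ : H →ₐ[k] A)
    (hψχ : ∀ x y, Commute (ψ x) (χ y)) :
    mulMap (φ ⊚ ψ) χ.toLinearMap R = mulMap φ χ.toLinearMap R * mulMap ψ χ.toLinearMap R := by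
  rw [← mulMap_leg13_mul_leg23 φ ψ χ hψχ, ← hR.2.1, convAlong, ← mulMap_comp_rTensor,
    ← mulMap_mulMap_comp_assoc]
  rfl

lemma mulMap_convAlong_right (hR : IsRMatrix k H R) (φ : H →ₐ[k] A) (ψ χ : H →ₗ[k] A)
    (hφχ : ∀ x y, Commute (φ x) (χ y)) (hψχ : ∀ x y, Commute (ψ x) (χ y)) :
    mulMap φ.toLinearMap (ψ ⊚ χ) R = mulMap φ.toLinearMap χ R * mulMap φ.toLinearMap ψ R := by
  rw [← mulMap_leg13_mul_leg12 φ ψ χ hφχ hψχ, ← hR.2.2.1, convAlong, ← mulMap_comp_lTensor]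
  rfl

lemma semiconjBy_mulMap_convAlong (hR : IsRMatrix k H R) (φ ψ : H →ₐ[k] A)
    (h : ∀ x y, Commute (φ x) (ψ y)) (x : H) :
    SemiconjBy (mulMap φ.toLinearMap ψ.toLinearMap R)
      ((φ.toLinearMap ⊚ ψ.toLinearMap) x) ((ψ.toLinearMap ⊚ φ.toLinearMap) x) := by
  have quasi := congrArg (mulMap φ.toLinearMap ψ.toLinearMap) (hR.2.2.2 x)
  rw [mulMap_mul φ ψ h, mulMap_mul φ ψ h, mulMap_comm h] at quasi
  exact quasi.symm

lemma commute_mulMap_monodromy (hR : IsRMatrix k H R) (φ ψ : H →ₐ[k] A)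
    (h : ∀ x y, Commute (φ x) (ψ y)) (x : H) :
    Commute (mulMap φ.toLinearMap ψ.toLinearMap (monodromy R))
      ((φ.toLinearMap ⊚ ψ.toLinearMap) x) := by
  rw [mulMap_monodromy φ ψ h]
  exact (semiconjBy_mulMap_convAlong hR ψ φ (fun x y => (h y x).symm) x).mul_left
    (semiconjBy_mulMap_convAlong hR φ ψ h x)

/-- The operator form of `(Δ ⊗ id)(R₂₁ R) = R₃₂ (R₃₁ R₁₃) R₂₃`. -/
lemma mulMap_convAlong_left_monodromy (hR : IsRMatrix k H R) (φ ψ χ : H →ₐ[k] A)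
    (hφψ : ∀ x y, Commute (φ x) (ψ y)) (hφχ : ∀ x y, Commute (φ x) (χ y))
    (hψχ : ∀ x y, Commute (ψ x) (χ y)) :
    mulMap (φ.toLinearMap ⊚ ψ.toLinearMap) χ.toLinearMap (monodromy R)
      = mulMap χ.toLinearMap ψ.toLinearMap R * mulMap φ.toLinearMap χ.toLinearMap (monodromy R)
        * mulMap ψ.toLinearMap χ.toLinearMap R := by
  have hχ (x y : H) : Commute (convAlgHom φ ψ hφψ x) (χ y) := by
    rw [← AlgHom.toLinearMap_apply, convAlgHom_toLinearMap]
    exact (commute_convAlong (fun x => (hφχ x y).symm) (fun x => (hψχ x y).symm) x).symm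
  rw [← convAlgHom_toLinearMap φ ψ hφψ, mulMap_monodromy _ _ hχ, mulMap_monodromy _ _ hφχ,
    convAlgHom_toLinearMap,
    mulMap_convAlong_right hR χ _ _ (fun x y => (hψχ y x).symm) hφψ,
    mulMap_convAlong_left hR _ _ χ hψχ]
  simp only [mul_assoc]

end RMatrix

section Operators

open MulOpposite

variable {k M N P : Type*} [CommSemiring k] [AddCommMonoid M] [Module k M]
  [AddCommMonoid N] [Module k N] [AddCommMonoid P] [Module k P]

section Intertwines

/-- `J` intertwines the operator `a` on `M` with the operator `b` on `N`. Here and below operators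
live in the opposite of the endomorphism algebra, so that `a * b` means first `a`, then `b`; this is
the order in which right actions compose. -/
def Intertwines (J : M →ₗ[k] N) (a : (Module.End k M)ᵐᵒᵖ) (b : (Module.End k N)ᵐᵒᵖ) : Prop :=
  J ∘ₗ a.unop = b.unop ∘ₗ J

namespace Intertwines

lemma apply {J : M →ₗ[k] N} {a : (Module.End k M)ᵐᵒᵖ} {b : (Module.End k N)ᵐᵒᵖ}
    (h : Intertwines J a b) (m : M) : J (a.unop m) = b.unop (J m) :=
  LinearMap.congr_fun h m

lemma mul {J : M →ₗ[k] N} {a a' : (Module.End k M)ᵐᵒᵖ} {b b' : (Module.End k N)ᵐᵒᵖ}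
    (h : Intertwines J a b) (h' : Intertwines J a' b') : Intertwines J (a * a') (b * b') :=
  LinearMap.ext fun m => by simp [h'.apply, h.apply]

lemma comp {J : M →ₗ[k] N} {J' : N →ₗ[k] P} {a : (Module.End k M)ᵐᵒᵖ}
    {b : (Module.End k N)ᵐᵒᵖ} {c : (Module.End k P)ᵐᵒᵖ}
    (h' : Intertwines J' b c) (h : Intertwines J a b) : Intertwines (J' ∘ₗ J) a c :=
  LinearMap.ext fun m => by simp [h'.apply, h.apply]

lemma unop_comp {J : M →ₗ[k] N} {a : (Module.End k M)ᵐᵒᵖ} {b b' c : (Module.End k N)ᵐᵒᵖ}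
    (h : Intertwines J a b) (hc : SemiconjBy c b' b) : Intertwines (c.unop ∘ₗ J) a b' :=
  LinearMap.ext fun m => by
    rw [comp_apply, comp_apply, comp_apply, h.apply, ← Module.End.mul_apply, ← unop_mul, ← hc.eq]
    rfl

lemma mulMap {V W : Type*} [AddCommMonoid V] [Module k V] [AddCommMonoid W] [Module k W]
    {J : M →ₗ[k] N} {φ : V →ₗ[k] (Module.End k M)ᵐᵒᵖ} {ψ : W →ₗ[k] (Module.End k M)ᵐᵒᵖ}
    {φ' : V →ₗ[k] (Module.End k N)ᵐᵒᵖ} {ψ' : W →ₗ[k] (Module.End k N)ᵐᵒᵖ}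
    (hφ : ∀ x, Intertwines J (φ x) (φ' x)) (hψ : ∀ y, Intertwines J (ψ y) (ψ' y))
    (z : V ⊗[k] W) :
    Intertwines J (Covariantised.mulMap φ ψ z) (Covariantised.mulMap φ' ψ' z) := by
  induction z with
  | zero => simp [Intertwines]
  | tmul x y => exact (hφ x).mul (hψ y)
  | add x y hx hy =>
    refine LinearMap.ext fun m => ?_
    simp [hx.apply, hy.apply]

end Intertwines

end Intertwines

section Positions

variable (M N P)

/-- Operators on `M` acting on the left factor of `M ⊗ N`. -/
def onLeft : (Module.End k M)ᵐᵒᵖ →ₐ[k] (Module.End k (M ⊗[k] N))ᵐᵒᵖ :=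
  AlgHom.op (Module.End.rTensorAlgHom k M N)

/-- Operators on `N` acting on the right factor of `M ⊗ N`. -/
def onRight : (Module.End k N)ᵐᵒᵖ →ₐ[k] (Module.End k (M ⊗[k] N))ᵐᵒᵖ :=
  AlgHom.op (Module.End.lTensorAlgHom k N M)

/-- Operators on `M ⊗ N` acting on the first two factors of `M ⊗ (N ⊗ P)`. -/
def onFirstTwo : (Module.End k (M ⊗[k] N))ᵐᵒᵖ →ₐ[k] (Module.End k (M ⊗[k] (N ⊗[k] P)))ᵐᵒᵖ :=
  (AlgHom.op ((TensorProduct.assoc k M N P).conjAlgEquiv k).toAlgHom).comp (onLeft (M ⊗[k] N) P)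

variable {M N P}

@[simp] lemma onLeft_unop (a : (Module.End k M)ᵐᵒᵖ) :
    (onLeft M N a).unop = rTensor N a.unop := rfl

@[simp] lemma onRight_unop (a : (Module.End k N)ᵐᵒᵖ) :
    (onRight M N a).unop = lTensor M a.unop := rfl

lemma onFirstTwo_comp_onLeft {C : Type*} [Semiring C] [Algebra k C]
    (φ : C →ₐ[k] (Module.End k M)ᵐᵒᵖ) :
    (onFirstTwo M N P).toLinearMap ∘ₗ ((onLeft M N).comp φ).toLinearMap
      = ((onLeft M (N ⊗[k] P)).comp φ).toLinearMap :=
  LinearMap.ext fun x => unop_injective <| by ext; simp [onFirstTwo]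

lemma onFirstTwo_comp_onRight {C : Type*} [Semiring C] [Algebra k C]
    (φ : C →ₐ[k] (Module.End k N)ᵐᵒᵖ) :
    (onFirstTwo M N P).toLinearMap ∘ₗ ((onRight M N).comp φ).toLinearMap
      = (((onRight M (N ⊗[k] P)).comp (onLeft N P)).comp φ).toLinearMap :=
  LinearMap.ext fun x => unop_injective <| by ext; simp [onFirstTwo]

lemma commute_onLeft_onRight (a : (Module.End k M)ᵐᵒᵖ) (b : (Module.End k N)ᵐᵒᵖ) :
    Commute (onLeft M N a) (onRight M N b) :=
  unop_injective <| by ext; simp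

lemma intertwines_assoc_onLeft (a : (Module.End k (M ⊗[k] N))ᵐᵒᵖ) :
    Intertwines (TensorProduct.assoc k M N P).toLinearMap (onLeft (M ⊗[k] N) P a)
      (onFirstTwo M N P a) :=
  LinearMap.ext fun m => by simp [onFirstTwo]

lemma intertwines_assoc_onRight (a : (Module.End k P)ᵐᵒᵖ) :
    Intertwines (TensorProduct.assoc k M N P).toLinearMap (onRight (M ⊗[k] N) P a)
      (onRight M (N ⊗[k] P) (onRight N P a)) := by
  unfold Intertwines
  ext; simp

namespace Intertwines

lemma rTensor_onLeft {J : M →ₗ[k] N} {a : (Module.End k M)ᵐᵒᵖ} {b : (Module.End k N)ᵐᵒᵖ}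
    (h : Intertwines J a b) : Intertwines (rTensor P J) (onLeft M P a) (onLeft N P b) := by
  simp only [Intertwines, onLeft_unop, ← rTensor_comp]
  exact congrArg _ h

lemma lTensor_onRight {J : M →ₗ[k] N} {a : (Module.End k M)ᵐᵒᵖ} {b : (Module.End k N)ᵐᵒᵖ}
    (h : Intertwines J a b) : Intertwines (lTensor P J) (onRight P M a) (onRight P N b) := by
  simp only [Intertwines, onRight_unop, ← lTensor_comp]
  exact congrArg _ h

lemma rTensor_onRight (J : M →ₗ[k] N) (a : (Module.End k P)ᵐᵒᵖ) :
    Intertwines (rTensor P J) (onRight M P a) (onRight N P a) := by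
  simp only [Intertwines, onRight_unop, rTensor_comp_lTensor, lTensor_comp_rTensor]

lemma lTensor_onLeft (J : M →ₗ[k] N) (a : (Module.End k P)ᵐᵒᵖ) :
    Intertwines (lTensor P J) (onLeft P M a) (onLeft P N a) := by
  simp only [Intertwines, onLeft_unop, rTensor_comp_lTensor, lTensor_comp_rTensor]

end Intertwines

lemma intertwines_mk_onRight (m : M) (a : (Module.End k N)ᵐᵒᵖ) :
    Intertwines (TensorProduct.mk k M N m) a (onRight M N a) :=
  LinearMap.ext fun n => by simp

end Positions

end Operators

section RightAdjoint

open MulOpposite HopfAlgebra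

variable {k H : Type*} [CommSemiring k] [Semiring H] [HopfAlgebra k H]

lemma comul_comp_antipode :
    Coalgebra.comul ∘ₗ antipode k (A := H)
      = (Algebra.TensorProduct.includeRight.toLinearMap ∘ₗ antipode k)
        ⊚ (Algebra.TensorProduct.includeLeft.toLinearMap ∘ₗ antipode k) := by
  let S : H →ₗ[k] H := antipode k
  let i₁ : H →ₐ[k] H ⊗[k] H := Algebra.TensorProduct.includeLeft
  let i₂ : H →ₐ[k] H ⊗[k] H := Algebra.TensorProduct.includeRight
  have cancel (i : H →ₐ[k] H ⊗[k] H) :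
      WithConv.toConv (i.toLinearMap ∘ₗ S) * WithConv.toConv i.toLinearMap = 1 := by
    have h := LinearMap.algHom_comp_convMul_distrib (R := k) i (WithConv.toConv S)
      (WithConv.toConv (LinearMap.id : H →ₗ[k] H))
    rw [LinearMap.antipode_mul_id] at h
    apply WithConv.ofConv_injective
    refine Eq.trans h.symm ?_
    ext x
    simp
  have comul_eq : WithConv.toConv (Coalgebra.comul (R := k) (A := H))
      = WithConv.toConv i₁.toLinearMap * WithConv.toConv i₂.toLinearMap := by
    apply WithConv.ofConv_injective
    have : LinearMap.mul' k (H ⊗[k] H) ∘ₗ TensorProduct.map i₁.toLinearMap i₂.toLinearMap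
        = LinearMap.id := by
      ext x y; simp [i₁, i₂]
    rw [LinearMap.convMul_def, ← LinearMap.comp_assoc, this, LinearMap.id_comp]
  apply WithConv.toConv_injective
  refine (left_inv_eq_right_inv (a := WithConv.toConv (Coalgebra.comul (R := k) (A := H)))
    (b := WithConv.toConv (i₂.toLinearMap ∘ₗ S) * WithConv.toConv (i₁.toLinearMap ∘ₗ S)) ?_
    LinearMap.comul_right_inv).symm
  rw [comul_eq, mul_assoc, ← mul_assoc _ (WithConv.toConv i₁.toLinearMap), cancel, one_mul, cancel]

variable (k H)

/-- Right multiplication `h ↦ (x ↦ x * h)`, as a family of operators on `H`. -/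
def rho : H →ₐ[k] (Module.End k H)ᵐᵒᵖ :=
  AlgHom.ofLinearMap ((opLinearEquiv k).toLinearMap ∘ₗ (LinearMap.mul k H).flip)
    (unop_injective <| by ext; simp)
    (fun x y => unop_injective <| by ext; simp [mul_assoc])

/-- Left multiplication by the antipode `h ↦ (x ↦ S h * x)`, as a family of operators on `H`. -/
def lam : H →ₐ[k] (Module.End k H)ᵐᵒᵖ :=
  (AlgHom.op (Algebra.lmul k H)).comp (antipodeAlgHomOp k H)

variable {k H}

@[simp] lemma rho_unop_apply (x y : H) : (rho k H x).unop y = y * x := rfl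

@[simp] lemma lam_unop_apply (x y : H) : (lam k H x).unop y = antipode k x * y := rfl

lemma commute_lam_rho (x y : H) : Commute (lam k H x) (rho k H y) :=
  unop_injective <| by ext; simp [mul_assoc]

variable (k H) in
/-- The right adjoint action `x ◁ h = S(h₁) x h₂` of `H` on itself. -/
def adjoint : H →ₐ[k] (Module.End k H)ᵐᵒᵖ :=
  convAlgHom (lam k H) (rho k H) commute_lam_rho

lemma adjoint_unop_one (h : H) :
    (adjoint k H h).unop 1 = algebraMap k H (Coalgebra.counit h) := by
  have mulMap_unop_one (z : H ⊗[k] H) :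
      (mulMap (lam k H).toLinearMap (rho k H).toLinearMap z).unop 1
        = LinearMap.mul' k H (rTensor H (antipode k) z) := by
    induction z with
    | zero => simp
    | tmul x y => simp
    | add x y hx hy => simp only [map_add, unop_add, LinearMap.add_apply, hx, hy]
  rw [adjoint, ← AlgHom.toLinearMap_apply, convAlgHom_toLinearMap, convAlong, comp_apply,
    mulMap_unop_one, mul_antipode_rTensor_comul_apply]

lemma adjoint_toLinearMap :
    (adjoint k H).toLinearMap = (lam k H).toLinearMap ⊚ (rho k H).toLinearMap :=
  convAlgHom_toLinearMap _ _ _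

lemma comp_adjoint {A : Type*} [Semiring A] [Algebra k A] (F : (Module.End k H)ᵐᵒᵖ →ₐ[k] A) :
    (F.comp (adjoint k H)).toLinearMap
      = (F.comp (lam k H)).toLinearMap ⊚ (F.comp (rho k H)).toLinearMap := by
  rw [AlgHom.comp_toLinearMap, adjoint_toLinearMap, comp_convAlong]
  rfl

end RightAdjoint

section Covariance

open MulOpposite HopfAlgebra

variable {k H : Type*}

local notation "on₁" => onLeft H (H ⊗[k] H)
local notation "on₂" => AlgHom.comp (onRight H (H ⊗[k] H)) (onLeft H H)
local notation "on₃" => AlgHom.comp (onRight H (H ⊗[k] H)) (onRight H H)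

-- Right multiplication `ρ`, left multiplication `λ` by the antipode, and the adjoint action `α`;
-- the index is the factor of `H ⊗ H` or of `H ⊗ (H ⊗ H)` they act on.
local notation "ρₗ" => AlgHom.toLinearMap (AlgHom.comp (onLeft H H) (rho k H))
local notation "ρᵣ" => AlgHom.toLinearMap (AlgHom.comp (onRight H H) (rho k H))
local notation "λₗ" => AlgHom.toLinearMap (AlgHom.comp (onLeft H H) (lam k H))
local notation "λᵣ" => AlgHom.toLinearMap (AlgHom.comp (onRight H H) (lam k H))
local notation "αₗ" => AlgHom.toLinearMap (AlgHom.comp (onLeft H H) (adjoint k H))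
local notation "αᵣ" => AlgHom.toLinearMap (AlgHom.comp (onRight H H) (adjoint k H))
local notation "ρ₁" => AlgHom.toLinearMap (AlgHom.comp on₁ (rho k H))
local notation "ρ₂" => AlgHom.toLinearMap (AlgHom.comp on₂ (rho k H))
local notation "ρ₃" => AlgHom.toLinearMap (AlgHom.comp on₃ (rho k H))
local notation "α₁" => AlgHom.toLinearMap (AlgHom.comp on₁ (adjoint k H))
local notation "α₂" => AlgHom.toLinearMap (AlgHom.comp on₂ (adjoint k H))

section Coproducts

variable [CommSemiring k] [Semiring H] [HopfAlgebra k H]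

lemma mulMap_rho_unop (z w : H ⊗[k] H) : (mulMap ρₗ ρᵣ z).unop w = w * z := by
  induction z with
  | zero => simp
  | add x y hx hy => simp only [map_add, unop_add, LinearMap.add_apply, mul_add, hx, hy]
  | tmul x y =>
    induction w with
    | zero => simp
    | add a b ha hb => simp only [map_add, add_mul, ha, hb]
    | tmul a b => simp

lemma intertwines_comul_rho (h : H) :
    Intertwines Coalgebra.comul (rho k H h) ((ρₗ ⊚ ρᵣ) h) :=
  LinearMap.ext fun m => by
    rw [comp_apply, comp_apply, rho_unop_apply, Bialgebra.comul_mul, convAlong, comp_apply,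
      mulMap_rho_unop]

lemma intertwines_comul_lam (h : H) :
    Intertwines Coalgebra.comul (lam k H h) ((λᵣ ⊚ λₗ) h) := by
  have mulMap_lam_unop (z w : H ⊗[k] H) :
      (mulMap λᵣ λₗ z).unop w
        = mulMap (Algebra.TensorProduct.includeRight.toLinearMap ∘ₗ antipode k)
          (Algebra.TensorProduct.includeLeft.toLinearMap ∘ₗ antipode k) z * w := by
    induction z with
    | zero => simp
    | add x y hx hy => simp only [map_add, unop_add, LinearMap.add_apply, add_mul, hx, hy]
    | tmul x y =>
      induction w with
      | zero => simp
      | add a b ha hb => simp only [map_add, mul_add, ha, hb]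
      | tmul a b => simp
  refine LinearMap.ext fun m => ?_
  rw [comp_apply, comp_apply, lam_unop_apply, Bialgebra.comul_mul, convAlong, comp_apply,
    mulMap_lam_unop, ← comp_apply (f := Coalgebra.comul (R := k)), comul_comp_antipode]
  rfl

lemma intertwines_comul_adjoint (h : H) :
    Intertwines Coalgebra.comul (adjoint k H h) (((λᵣ ⊚ λₗ) ⊚ (ρₗ ⊚ ρᵣ)) h) := by
  rw [← AlgHom.toLinearMap_apply, adjoint_toLinearMap]
  exact Intertwines.mulMap intertwines_comul_lam intertwines_comul_rho _

/-- The operator `x ⊗ y ↦ (x ◁ R²) ⊗ y R¹` on `H ⊗ H`. -/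
def twist (R : H ⊗[k] H) : (Module.End k (H ⊗[k] H))ᵐᵒᵖ := mulMap ρᵣ αₗ R

/-- The coproduct `x ↦ (x₁ ◁ R²) ⊗ x₂ R¹` dual to the (opposite) covariantised product. -/
def starComul (R : H ⊗[k] H) : H →ₗ[k] H ⊗[k] H := (twist R).unop ∘ₗ Coalgebra.comul

end Coproducts

section RMatrix

variable [Field k] [Ring H] [HopfAlgebra k H] {R : H ⊗[k] H}

lemma semiconjBy_twist (hR : IsRMatrix k H R) (h : H) :
    SemiconjBy (twist R) ((αᵣ ⊚ αₗ) h) (((λᵣ ⊚ λₗ) ⊚ (ρₗ ⊚ ρᵣ)) h) := by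
  have source : αᵣ ⊚ αₗ = λᵣ ⊚ (ρᵣ ⊚ αₗ) := by rw [comp_adjoint, comul_convAlong_assoc]
  have target : (λᵣ ⊚ λₗ) ⊚ (ρₗ ⊚ ρᵣ) = λᵣ ⊚ (αₗ ⊚ ρᵣ) := by
    rw [comp_adjoint, comul_convAlong_assoc, comul_convAlong_assoc]
  rw [source, target]
  refine semiconjBy_convAlong (fun x => ?_)
    (semiconjBy_mulMap_convAlong hR _ _ fun x y => (commute_onLeft_onRight _ _).symm) h
  exact (commute_mulMap (fun y => (commute_lam_rho x y).map (onRight H H))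
    (fun y => (commute_onLeft_onRight _ _).symm) R).symm

lemma intertwines_starComul_adjoint (hR : IsRMatrix k H R) (h : H) :
    Intertwines (starComul R) (adjoint k H h) ((αᵣ ⊚ αₗ) h) :=
  (intertwines_comul_adjoint h).unop_comp (semiconjBy_twist hR h)

lemma onRight_twist : onRight H (H ⊗[k] H) (twist R) = mulMap ρ₃ α₂ R :=
  LinearMap.congr_fun (comp_mulMap (onRight H (H ⊗[k] H)) ρᵣ αₗ) R

lemma onFirstTwo_twist : onFirstTwo H H H (twist R) = mulMap ρ₂ α₁ R := by
  rw [twist, ← AlgHom.toLinearMap_apply, ← comp_apply, comp_mulMap, onFirstTwo_comp_onRight,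
    onFirstTwo_comp_onLeft]

lemma lTensor_starComul : lTensor H (starComul R)
    = (mulMap ρ₃ α₂ R).unop ∘ₗ lTensor H Coalgebra.comul := by
  rw [starComul, lTensor_comp, ← onRight_twist]
  rfl

lemma assoc_comp_rTensor_starComul :
    (TensorProduct.assoc k H H H).toLinearMap ∘ₗ rTensor H (starComul R)
      = (mulMap ρ₂ α₁ R).unop
        ∘ₗ (TensorProduct.assoc k H H H).toLinearMap ∘ₗ rTensor H Coalgebra.comul := by
  rw [starComul, rTensor_comp, ← LinearMap.comp_assoc, ← LinearMap.comp_assoc, ← onFirstTwo_twist]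
  exact congrArg (· ∘ₗ _) (intertwines_assoc_onLeft (twist R))

lemma intertwines_rTensor_starComul_twist (hR : IsRMatrix k H R) :
    Intertwines ((TensorProduct.assoc k H H H).toLinearMap ∘ₗ rTensor H (starComul R)) (twist R)
      (mulMap ρ₃ α₁ R * mulMap ρ₃ α₂ R) := by
  have hα : ∀ x y, Commute (α₂ x) (α₁ y) := fun x y => (commute_onLeft_onRight _ _).symm
  have hρα : ∀ x y, Commute (ρ₃ x) (α₁ y) := fun x y => (commute_onLeft_onRight _ _).symm
  have convAlong_adjoint (h : H) : onFirstTwo H H H ((αᵣ ⊚ αₗ) h) = (α₂ ⊚ α₁) h := by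
    rw [← AlgHom.toLinearMap_apply, ← comp_apply, comp_convAlong, onFirstTwo_comp_onRight,
      onFirstTwo_comp_onLeft]
  rw [← mulMap_convAlong_right hR _ _ _ hρα hα]
  refine Intertwines.mulMap
    (fun h => (intertwines_assoc_onRight _).comp (Intertwines.rTensor_onRight _ _)) (fun h => ?_) R
  rw [← convAlong_adjoint]
  exact (intertwines_assoc_onLeft _).comp (intertwines_starComul_adjoint hR h).rTensor_onLeft

lemma intertwines_lTensor_comul_twist (hR : IsRMatrix k H R) :
    Intertwines (lTensor H Coalgebra.comul) (twist R) (mulMap ρ₂ α₁ R * mulMap ρ₃ α₁ R) := by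
  have hρα : ∀ x y, Commute (ρ₃ x) (α₁ y) := fun x y => (commute_onLeft_onRight _ _).symm
  have convAlong_rho (h : H) : onRight H (H ⊗[k] H) ((ρₗ ⊚ ρᵣ) h) = (ρ₂ ⊚ ρ₃) h :=
    LinearMap.congr_fun (comp_convAlong (onRight H (H ⊗[k] H)) _ ρₗ ρᵣ) h
  rw [← mulMap_convAlong_left hR _ _ _ hρα]
  refine Intertwines.mulMap (fun h => ?_) (fun h => Intertwines.lTensor_onLeft _ _) R
  rw [← convAlong_rho]
  exact (intertwines_comul_rho h).lTensor_onRight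

lemma starComul_coassoc (hR : IsRMatrix k H R) :
    (TensorProduct.assoc k H H H).toLinearMap ∘ₗ rTensor H (starComul R) ∘ₗ starComul R
      = lTensor H (starComul R) ∘ₗ starComul R := by
  have left : (TensorProduct.assoc k H H H).toLinearMap ∘ₗ rTensor H (starComul R)
        ∘ₗ (twist R).unop
      = (mulMap ρ₂ α₁ R * (mulMap ρ₃ α₁ R * mulMap ρ₃ α₂ R)).unop
        ∘ₗ (TensorProduct.assoc k H H H).toLinearMap ∘ₗ rTensor H Coalgebra.comul := by
    rw [← LinearMap.comp_assoc, intertwines_rTensor_starComul_twist hR,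
      assoc_comp_rTensor_starComul]
    rfl
  have right : lTensor H (starComul R) ∘ₗ (twist R).unop
      = ((mulMap ρ₂ α₁ R * mulMap ρ₃ α₁ R) * mulMap ρ₃ α₂ R).unop
        ∘ₗ lTensor H Coalgebra.comul := by
    rw [lTensor_starComul, LinearMap.comp_assoc, intertwines_lTensor_comul_twist hR]
    rfl
  refine LinearMap.ext fun x => ?_
  have hl := LinearMap.congr_fun left (Coalgebra.comul x)
  have hr := LinearMap.congr_fun right (Coalgebra.comul x)
  rw [mul_assoc, comp_apply _ (lTensor H _), ← Coalgebra.coassoc_apply] at hr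
  exact hl.trans hr.symm

lemma commute_rho_second_third (x y : H) : Commute (ρ₂ x) (ρ₃ y) :=
  (commute_onLeft_onRight _ _).map (onRight H (H ⊗[k] H))

lemma intertwines_mk_one_adjoint (h : H) :
    Intertwines (TensorProduct.mk k H (H ⊗[k] H) 1)
      (algebraMap k (Module.End k (H ⊗[k] H))ᵐᵒᵖ (Coalgebra.counit h)) (α₁ h) :=
  LinearMap.ext fun w => by
    simp [adjoint_unop_one, Algebra.algebraMap_eq_smul_one, TensorProduct.smul_tmul']

lemma intertwines_mk_one_adjoint_convAlong_rho (h : H) :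
    Intertwines (TensorProduct.mk k H (H ⊗[k] H) 1) (ρᵣ h) ((α₁ ⊚ ρ₃) h) := by
  have counit_convAlong : ((Algebra.linearMap k _ ∘ₗ Coalgebra.counit) ⊚ ρᵣ) h = ρᵣ h :=
    LinearMap.congr_fun (linearMap_comp_counit_convAlong ρᵣ) h
  have hρ (x : H) : Intertwines (TensorProduct.mk k H (H ⊗[k] H) 1) (ρᵣ x) (ρ₃ x) :=
    intertwines_mk_onRight 1 _
  rw [← counit_convAlong]
  exact Intertwines.mulMap (φ := Algebra.linearMap k _ ∘ₗ Coalgebra.counit) (ψ := ρᵣ) (φ' := α₁)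
    (ψ' := ρ₃) intertwines_mk_one_adjoint hρ (Coalgebra.comul h)

lemma monodromy_eq_unop_one :
    monodromy R = (mulMap ρᵣ ρₗ R * mulMap ρₗ ρᵣ R).unop 1 := by
  have hρ : ∀ x y : H, Commute ((onLeft H H).comp (rho k H) x) ((onRight H H).comp (rho k H) y) :=
    fun _ _ => commute_onLeft_onRight _ _
  rw [← mulMap_monodromy _ _ hρ, mulMap_rho_unop, one_mul]

lemma one_tmul_monodromy (hR : IsRMatrix k H R) :
    (1 : H) ⊗ₜ[k] monodromy R
      = (mulMap ρ₃ ρ₂ R * (mulMap ρ₂ ρ₃ R * mulMap ρ₂ α₁ R)).unop 1 := by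
  have hαρ : ∀ x y, Commute (α₁ x) (ρ₃ y) := fun x y => commute_onLeft_onRight _ _
  have hρ₂ (x : H) : Intertwines (TensorProduct.mk k H (H ⊗[k] H) 1) (ρₗ x) (ρ₂ x) :=
    intertwines_mk_onRight 1 _
  have hρ₃ (x : H) : Intertwines (TensorProduct.mk k H (H ⊗[k] H) 1) (ρᵣ x) (ρ₃ x) :=
    intertwines_mk_onRight 1 _
  have first : Intertwines (TensorProduct.mk k H (H ⊗[k] H) 1) (mulMap ρᵣ ρₗ R)
      (mulMap ρ₃ ρ₂ R) := Intertwines.mulMap (φ := ρᵣ) (ψ := ρₗ) hρ₃ hρ₂ R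
  have second : Intertwines (TensorProduct.mk k H (H ⊗[k] H) 1) (mulMap ρₗ ρᵣ R)
      (mulMap ρ₂ (α₁ ⊚ ρ₃) R) :=
    Intertwines.mulMap (φ := ρₗ) (ψ := ρᵣ) hρ₂ intertwines_mk_one_adjoint_convAlong_rho R
  rw [← mulMap_convAlong_right hR _ _ _ commute_rho_second_third hαρ, monodromy_eq_unop_one]
  exact (first.mul second).apply 1

lemma mulMap_rho_first_third_unop (z : H ⊗[k] H) (w : H ⊗[k] (H ⊗[k] H)) :
    (mulMap ρ₁ ρ₃ z).unop w = w * leg13 k H z := by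
  induction z with
  | zero => simp [leg13, leg12]
  | add x y hx hy => simp only [map_add, unop_add, LinearMap.add_apply, leg13_add, mul_add, hx, hy]
  | tmul x y =>
    have h : (mulMap ρ₁ ρ₃ (x ⊗ₜ[k] y)).unop = LinearMap.mulRight k (leg13 k H (x ⊗ₜ[k] y)) := by
      ext; simp [leg13_tmul]
    exact LinearMap.congr_fun h w

lemma assoc_rTensor_comul_monodromy (hR : IsRMatrix k H R) :
    TensorProduct.assoc k H H H (rTensor H Coalgebra.comul (monodromy R))
      = (mulMap ρ₃ ρ₂ R * mulMap ρ₁ ρ₃ (monodromy R) * mulMap ρ₂ ρ₃ R).unop 1 := by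
  have convAlong_rho (h : H) : onFirstTwo H H H ((ρₗ ⊚ ρᵣ) h) = (ρ₁ ⊚ ρ₂) h := by
    rw [← AlgHom.toLinearMap_apply, ← comp_apply, comp_convAlong, onFirstTwo_comp_onRight,
      onFirstTwo_comp_onLeft]
  have h : Intertwines ((TensorProduct.assoc k H H H).toLinearMap ∘ₗ rTensor H Coalgebra.comul)
      (mulMap ρₗ ρᵣ (monodromy R)) (mulMap (ρ₁ ⊚ ρ₂) ρ₃ (monodromy R)) := by
    refine Intertwines.mulMap (fun h => ?_)
      (fun h => (intertwines_assoc_onRight _).comp (Intertwines.rTensor_onRight _ _)) _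
    rw [← convAlong_rho]
    exact (intertwines_assoc_onLeft _).comp (intertwines_comul_rho h).rTensor_onLeft
  have at_one := h.apply 1
  rw [mulMap_rho_unop, one_mul, mulMap_convAlong_left_monodromy hR _ _ _
    (fun _ _ => commute_onLeft_onRight _ _) (fun _ _ => commute_onLeft_onRight _ _)
    commute_rho_second_third] at at_one
  simpa [Algebra.TensorProduct.one_def] using at_one

/-- This rests on `α₁ ⊚ ρ₃ = λ₁ ⊚ (ρ₁ ⊚ ρ₃)`, together with the fact that `R₃₁ R₁₃` commutes with
the coproduct in the outer factors. -/
lemma commute_mulMap_rho_monodromy (hR : IsRMatrix k H R) :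
    Commute (mulMap ρ₁ ρ₃ (monodromy R)) (mulMap ρ₂ ρ₃ R * mulMap ρ₂ α₁ R) := by
  have hαρ : ∀ x y, Commute (α₁ x) (ρ₃ y) := fun x y => commute_onLeft_onRight _ _
  rw [← mulMap_convAlong_right hR _ _ _ commute_rho_second_third hαρ, comp_adjoint,
    comul_convAlong_assoc]
  refine commute_mulMap (fun x => ?_) (commute_convAlong (fun x => ?_)
    (commute_mulMap_monodromy hR _ _ fun _ _ => commute_onLeft_onRight _ _)) R
  · exact (commute_mulMap (fun _ => (commute_onLeft_onRight _ _).symm)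
      (commute_rho_second_third x) _).symm
  · exact (commute_mulMap (fun y => (commute_lam_rho x y).map (onLeft H (H ⊗[k] H)))
      (fun _ => commute_onLeft_onRight _ _) _).symm

lemma assoc_rTensor_starComul_monodromy (hR : IsRMatrix k H R) :
    TensorProduct.assoc k H H H (rTensor H (starComul R) (monodromy R))
      = leg23 k H (monodromy R) * leg13 k H (monodromy R) := by
  have reorder : mulMap ρ₃ ρ₂ R * mulMap ρ₁ ρ₃ (monodromy R) * mulMap ρ₂ ρ₃ R * mulMap ρ₂ α₁ R
      = mulMap ρ₃ ρ₂ R * (mulMap ρ₂ ρ₃ R * mulMap ρ₂ α₁ R) * mulMap ρ₁ ρ₃ (monodromy R) := by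
    rw [mul_assoc, mul_assoc, (commute_mulMap_rho_monodromy hR).eq, ← mul_assoc]
  calc _ = (mulMap ρ₃ ρ₂ R * mulMap ρ₁ ρ₃ (monodromy R) * mulMap ρ₂ ρ₃ R
          * mulMap ρ₂ α₁ R).unop 1 := by
        rw [unop_mul, Module.End.mul_apply, ← assoc_rTensor_comul_monodromy hR]
        exact LinearMap.congr_fun assoc_comp_rTensor_starComul _
    _ = (mulMap ρ₁ ρ₃ (monodromy R)).unop (1 ⊗ₜ[k] monodromy R) := by
        rw [reorder, unop_mul, Module.End.mul_apply, ← one_tmul_monodromy hR]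
    _ = _ := mulMap_rho_first_third_unop _ _

lemma Qmap_apply (p : Module.Dual k H) :
    Qmap R p = mulMap (Algebra.linearMap k H ∘ₗ p) LinearMap.id (monodromy R) := by
  simp only [Qmap, comp_apply, flip_apply, mk_apply, monodromy]
  generalize TensorProduct.comm k H H R * R = z
  induction z with
  | zero => simp
  | tmul x y => simp [Algebra.smul_def]
  | add x y hx hy => simp only [TensorProduct.tmul_add, map_add, hx, hy]

lemma Qmap_convAlong_starComul (hR : IsRMatrix k H R) (f g : Module.Dual k H) :
    Qmap R (convAlong (starComul R) g f) = Qmap R f * Qmap R g := by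
  let ι := Algebra.linearMap k H
  have hι (p : Module.Dual k H) (x y : H) : Commute ((ι ∘ₗ p) x) y := Algebra.commutes _ _
  have convAlong_eq : ι ∘ₗ convAlong (starComul R) g f
      = convAlong (starComul R) (ι ∘ₗ g) (ι ∘ₗ f) :=
    comp_convAlong (Algebra.ofId k H) (starComul R) g f
  calc Qmap R (convAlong (starComul R) g f)
      = mulMap (mulMap (ι ∘ₗ g) (ι ∘ₗ f)) LinearMap.id
          (rTensor H (starComul R) (monodromy R)) := by
        rw [Qmap_apply, convAlong_eq, convAlong, ← mulMap_comp_rTensor, comp_apply]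
    _ = mulMap (ι ∘ₗ g) (mulMap (ι ∘ₗ f) LinearMap.id)
          (leg23 k H (monodromy R) * leg13 k H (monodromy R)) := by
        rw [← mulMap_mulMap_comp_assoc, comp_apply, LinearEquiv.coe_coe,
          assoc_rTensor_starComul_monodromy hR]
    _ = Qmap R f * Qmap R g := by
        rw [Qmap_apply, Qmap_apply]
        exact mulMap_leg23_mul_leg13 _ _ (AlgHom.id k H) (fun x _ => hι g x _)
          (fun x _ => hι g x _) _ _

lemma sum_mulR_lact_ract (hR : IsRMatrix k H R) {ι : Type*} [Fintype ι] {a b : ι → H}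
    (hab : R = ∑ i, a i ⊗ₜ[k] b i) (f g : Module.Dual k H) :
    ∑ i, mulR R (lact (a i) f) (ract (antipode k (b i)) g) = convAlong (starComul R) g f := by
  have twist_eq : twist R = mulMap ρᵣ ρₗ R * mulMap ρᵣ λₗ R := by
    have hρ : ∀ x y, Commute (ρᵣ x) (ρₗ y) := fun _ _ => (commute_onLeft_onRight _ _).symm
    have hlr : ∀ x y, Commute (λₗ x) (ρₗ y) := fun x y => (commute_lam_rho x y).map (onLeft H H)
    rw [twist, comp_adjoint, mulMap_convAlong_right hR _ _ _ hρ hlr]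
  have mulMap_lact_ract (i : ι) (w : H ⊗[k] H) :
      mulMap (ract (antipode k (b i)) g) (lact (a i) f) w
        = mulMap g f ((mulMap ρᵣ λₗ (a i ⊗ₜ[k] b i)).unop w) := by
    induction w with
    | zero => simp
    | tmul x y => simp [lact, ract]
    | add x y hx hy => simp only [map_add, hx, hy]
  have mul_comm_eq (w : H ⊗[k] H) :
      w * TensorProduct.comm k H H R = (mulMap ρᵣ ρₗ R).unop w := by
    rw [← mulMap_rho_unop, mulMap_comm fun _ _ => commute_onLeft_onRight _ _]
  refine LinearMap.ext fun x => ?_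
  rw [LinearMap.sum_apply]
  calc _ = ∑ i, mulMap (ract (antipode k (b i)) g) (lact (a i) f)
          (Coalgebra.comul x * TensorProduct.comm k H H R) := rfl
    _ = mulMap g f ((mulMap ρᵣ λₗ (∑ i, a i ⊗ₜ[k] b i)).unop
          ((mulMap ρᵣ ρₗ R).unop (Coalgebra.comul x))) := by
        simp only [mul_comm_eq, mulMap_lact_ract, map_sum, Finset.unop_sum, LinearMap.sum_apply]
    _ = _ := by
        rw [← hab, ← Module.End.mul_apply, ← unop_mul, ← twist_eq]
        rfl

end RMatrix

end Covariance

end Covariantised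

/-- Let `(H, R)` be a quasitriangular Hopf algebra over a field `k` with
antipode `S`, let `Q : H* → H`, `Q(p) = Σ p(R² r¹) R¹ r²`, and let `⋆` be the
covariantised product on `H*`, `f ⋆ g = Σ (R¹ ⇀ f) · (g ↼ S(R²))` (where `·` is the
product of `H*_R`).  Then `⋆` is associative, and `Q(f ⋆ g) = Q(f) Q(g)` for all
`f, g ∈ H*`. -/
theorem covariantised_product_associative_and_Qmap_mul
    {k H : Type*} [Field k] [Ring H] [HopfAlgebra k H]
    (R : H ⊗[k] H) (hR : IsRMatrix k H R)
    (star : Module.Dual k H → Module.Dual k H → Module.Dual k H)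
    (hstar : ∀ (f g : Module.Dual k H) (n : ℕ) (R₁ R₂ : Fin n → H),
      R = ∑ i, R₁ i ⊗ₜ[k] R₂ i →
      star f g = ∑ i, mulR R (lact (R₁ i) f)
        (ract (HopfAlgebra.antipode (R := k) (R₂ i)) g)) :
    (∀ f g l : Module.Dual k H, star (star f g) l = star f (star g l))
    ∧ (∀ f g : Module.Dual k H, Qmap R (star f g) = Qmap R f * Qmap R g) := by
  have key (f g : Module.Dual k H) :
      star f g = Covariantised.convAlong (Covariantised.starComul R) g f := by
    obtain ⟨n, R₁, R₂, hsum⟩ := TensorProduct.exists_sum_tmul_eq R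
    rw [hstar f g n R₁ R₂ hsum, Covariantised.sum_mulR_lact_ract hR hsum]
  refine ⟨fun f g l => ?_, fun f g => ?_⟩
  · rw [key f g, key _ l, key g l, key f]
    exact (Covariantised.convAlong_assoc (Covariantised.starComul_coassoc hR) l g f).symm
  · rw [key, Covariantised.Qmap_convAlong_starComul hR]
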